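/- arXiv:2210.07876 — 4 statements merged into one kernel-verified Lean document; each statement's English description precedes it below -/
import Mathlib

section
/- Coupling Lemma: Let P and Q be probability distributions on countable sets X and Y respectively, let Z be a set, and let f : X → Z and g : Y → Z be functions such that f(X) ≈_{ε,δ} g(Y) when X ∼ P and Y ∼ Q. Fix a default element ⊥ ∈ Y and, for each x ∈ X, let Q_x be the distribution of Y ∼ Q conditioned on the event g(Y) = f(x) when Q({y : g(y) = f(x)}) > 0, and the point mass at ⊥ otherwise. If one samples X ∼ P and then Y' ∼ Q_X, then: (1) Y' ≈_{ε,δ} Y, and (2) f(X) = g(Y') with probability at least 1 − δ. -/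
open scoped ENNReal

/-- `(ε,δ)`-indistinguishability of two probability mass functions on a countable set:
for every event `E`, `P(E) ≤ e^ε·Q(E) + δ` and `Q(E) ≤ e^ε·P(E) + δ`. -/
def pmfIndist {X : Type*} (ε δ : ℝ) (P Q : PMF X) : Prop :=
  ∀ E : Set X,
    P.toOuterMeasure E ≤ ENNReal.ofReal (Real.exp ε) * Q.toOuterMeasure E + ENNReal.ofReal δ ∧
    Q.toOuterMeasure E ≤ ENNReal.ofReal (Real.exp ε) * P.toOuterMeasure E + ENNReal.ofReal δ

open Classical in
/-- The distribution of `Y ∼ Q` conditioned on the event `Y ∈ s` when `Q(s) > 0`,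
and the point mass at `bot` otherwise. -/
noncomputable def condOn {Y : Type*} (Q : PMF Y) (bot : Y) (s : Set Y) : PMF Y :=
  if h : ∃ y ∈ s, Q y ≠ 0 then Q.filter s h else PMF.pure bot

/-!
The coupling is `(f(X), Y')`, compared with `(g(Y), Y)`. Both arise by feeding `f(X)`, respectively
`g(Y)`, to the same randomized map `z ↦ (z, Q conditioned on g = z)`; for `g(Y)` this is the
disintegration of `Q` along `g`. Randomized maps preserve indistinguishability, because the excess
of one weight function over `e^ε` times the other already sums to at most `δ`; so the two pairs
are `(ε,δ)`-indistinguishable. Projecting to the second coordinate gives (1), and the event that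
the pair leaves the graph of `g`, which is null for `(g(Y), Y)`, has probability at most `δ`
for `(f(X), Y')`, which is (2).
-/

section Weights

variable {ι : Type*} {a b w : ι → ℝ≥0∞} {d : ℝ≥0∞}

theorem tsum_tsub_le_of_forall_sum_le (h : ∀ s : Finset ι, ∑ i ∈ s, a i ≤ ∑ i ∈ s, b i + d) :
    ∑' i, (a i - b i) ≤ d := by
  classical
  refine ENNReal.summable.tsum_le_of_sum_le fun s => ?_
  -- Off `t` the truncated differences vanish; on `t` the weights `b` are finite, so they cancel.
  let t := s.filter fun i => b i < a i
  have hlt : ∀ i ∈ t, b i < a i := fun i hi => (Finset.mem_filter.mp hi).2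
  have hfin : ∑ i ∈ t, b i ≠ ∞ := ENNReal.sum_ne_top.mpr fun i hi => (hlt i hi).ne_top
  have hst : ∑ i ∈ t, (a i - b i) = ∑ i ∈ s, (a i - b i) :=
    Finset.sum_filter_of_ne fun i _ hi => tsub_pos_iff_lt.mp (pos_iff_ne_zero.mpr hi)
  rw [← hst, ← ENNReal.add_le_add_iff_left hfin]
  calc ∑ i ∈ t, b i + ∑ i ∈ t, (a i - b i) = ∑ i ∈ t, a i := by
        rw [← Finset.sum_add_distrib]
        exact Finset.sum_congr rfl fun i hi => add_tsub_cancel_of_le (hlt i hi).le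
    _ ≤ ∑ i ∈ t, b i + d := h t

theorem tsum_mul_le_of_forall_sum_le (h : ∀ s : Finset ι, ∑ i ∈ s, a i ≤ ∑ i ∈ s, b i + d)
    (hw : ∀ i, w i ≤ 1) : ∑' i, a i * w i ≤ ∑' i, b i * w i + d := by
  have hterm (i : ι) : a i * w i ≤ b i * w i + (a i - b i) :=
    calc a i * w i ≤ (b i + (a i - b i)) * w i := by gcongr; exact le_add_tsub
      _ = b i * w i + (a i - b i) * w i := add_mul ..
      _ ≤ b i * w i + (a i - b i) := by gcongr; exact mul_le_of_le_one_right' (hw i)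
  calc ∑' i, a i * w i ≤ ∑' i, (b i * w i + (a i - b i)) := ENNReal.tsum_le_tsum hterm
    _ = ∑' i, b i * w i + ∑' i, (a i - b i) := ENNReal.tsum_add
    _ ≤ ∑' i, b i * w i + d := by gcongr; exact tsum_tsub_le_of_forall_sum_le h

end Weights

section Events

variable {α β : Type*}

theorem pmf_toOuterMeasure_le_one (p : PMF α) (s : Set α) : p.toOuterMeasure s ≤ 1 :=
  calc p.toOuterMeasure s ≤ p.toOuterMeasure Set.univ := MeasureTheory.measure_mono s.subset_univ
    _ = 1 := (p.toOuterMeasure_apply_eq_one_iff _).mpr (Set.subset_univ _)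

theorem pmf_one_le_toOuterMeasure_add_compl (p : PMF α) (s : Set α) :
    1 ≤ p.toOuterMeasure s + p.toOuterMeasure sᶜ :=
  calc 1 = p.toOuterMeasure (s ∪ sᶜ) := by
        rw [eq_comm, PMF.toOuterMeasure_apply_eq_one_iff, Set.union_compl_self]
        exact Set.subset_univ _
    _ ≤ p.toOuterMeasure s + p.toOuterMeasure sᶜ := MeasureTheory.measure_union_le s sᶜ

theorem pmf_map_apply_eq_toOuterMeasure (p : PMF α) (f : α → β) (b : β) :
    p.map f b = p.toOuterMeasure (f ⁻¹' {b}) := by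
  rw [← PMF.toOuterMeasure_apply_singleton, PMF.toOuterMeasure_map_apply]

theorem pmf_toOuterMeasure_bind_le {p q : PMF α} {c d : ℝ≥0∞}
    (h : ∀ s : Set α, p.toOuterMeasure s ≤ c * q.toOuterMeasure s + d)
    (K : α → PMF β) (t : Set β) :
    (p.bind K).toOuterMeasure t ≤ c * (q.bind K).toOuterMeasure t + d := by
  have hsum (s : Finset α) : ∑ i ∈ s, p i ≤ ∑ i ∈ s, c * q i + d := by
    simpa only [PMF.toOuterMeasure_apply_finset, Finset.mul_sum] using h s
  simpa only [PMF.toOuterMeasure_bind_apply, mul_assoc, ENNReal.tsum_mul_left] using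
    tsum_mul_le_of_forall_sum_le hsum fun i => pmf_toOuterMeasure_le_one (K i) t

end Events

namespace pmfIndist

variable {α β : Type*} {ε δ : ℝ} {p q : PMF α}

theorem bind (h : pmfIndist ε δ p q) (K : α → PMF β) :
    pmfIndist ε δ (p.bind K) (q.bind K) := fun t =>
  ⟨pmf_toOuterMeasure_bind_le (fun s => (h s).1) K t,
    pmf_toOuterMeasure_bind_le (fun s => (h s).2) K t⟩

theorem map (h : pmfIndist ε δ p q) (f : α → β) : pmfIndist ε δ (p.map f) (q.map f) :=
  h.bind (PMF.pure ∘ f)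

theorem ofReal_one_sub_le_of_support_subset (h : pmfIndist ε δ p q) (hδ : 0 ≤ δ)
    {s : Set α} (hs : q.support ⊆ s) : ENNReal.ofReal (1 - δ) ≤ p.toOuterMeasure s := by
  have hq : q.toOuterMeasure sᶜ = 0 :=
    (q.toOuterMeasure_apply_eq_zero_iff _).mpr (Set.disjoint_compl_right_iff_subset.mpr hs)
  have hp : p.toOuterMeasure sᶜ ≤ ENNReal.ofReal δ := by
    simpa only [hq, mul_zero, zero_add] using (h sᶜ).1
  rw [ENNReal.ofReal_sub _ hδ, ENNReal.ofReal_one, tsub_le_iff_right]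
  exact (pmf_one_le_toOuterMeasure_add_compl p s).trans (by gcongr)

end pmfIndist

section Conditioning

variable {Y Z : Type*} (Q : PMF Y) (bot : Y)

theorem toOuterMeasure_mul_condOn_apply (s : Set Y) (y : Y) :
    Q.toOuterMeasure s * condOn Q bot s y = s.indicator Q y := by
  by_cases hs : ∃ y ∈ s, y ∈ Q.support
  · have hcond : condOn Q bot s = Q.filter s hs := dif_pos hs
    have hpos : Q.toOuterMeasure s ≠ 0 := by
      rw [Ne, PMF.toOuterMeasure_apply_eq_zero_iff, Set.not_disjoint_iff]
      exact hs.imp fun _ => And.symm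
    have hfin : Q.toOuterMeasure s ≠ ∞ :=
      ((pmf_toOuterMeasure_le_one Q s).trans_lt ENNReal.one_lt_top).ne
    rw [hcond, PMF.filter_apply, ← PMF.toOuterMeasure_apply, mul_left_comm,
      ENNReal.mul_inv_cancel hpos hfin, mul_one]
  · have hzero : s.indicator Q = 0 :=
      Set.indicator_eq_zero'.mpr <| Set.disjoint_left.mpr fun y hy hys => hs ⟨y, hys, hy⟩
    rw [PMF.toOuterMeasure_apply, hzero]
    simp only [Pi.zero_apply, tsum_zero, zero_mul]

theorem toOuterMeasure_mul_condOn_toOuterMeasure (s t : Set Y) :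
    Q.toOuterMeasure s * (condOn Q bot s).toOuterMeasure t = Q.toOuterMeasure (t ∩ s) := by
  simp only [PMF.toOuterMeasure_apply, ← ENNReal.tsum_mul_left]
  refine tsum_congr fun y => ?_
  rw [← PMF.toOuterMeasure_apply, ← Set.indicator_indicator]
  by_cases hy : y ∈ t
  · simp only [Set.indicator_of_mem hy, toOuterMeasure_mul_condOn_apply]
  · simp only [Set.indicator_of_notMem hy, mul_zero]

theorem map_bind_condOn_fiber (g : Y → Z) :
    ((Q.map g).bind fun z => (condOn Q bot {y | g y = z}).map (Prod.mk z)) =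
      Q.map fun y => (g y, y) := by
  ext ⟨z, y⟩
  have hterm (z' : Z) : Q.map g z' * (condOn Q bot {v | g v = z'}).map (Prod.mk z') (z, y) =
      Q.toOuterMeasure (Prod.mk z' ⁻¹' {(z, y)} ∩ {v | g v = z'}) := by
    rw [pmf_map_apply_eq_toOuterMeasure, pmf_map_apply_eq_toOuterMeasure]
    exact toOuterMeasure_mul_condOn_toOuterMeasure Q bot _ _
  rw [PMF.bind_apply, tsum_congr hterm, pmf_map_apply_eq_toOuterMeasure, tsum_eq_single z]
  · congr 1
    ext v
    simp only [Set.mem_inter_iff, Set.mem_preimage, Set.mem_singleton_iff, Set.mem_ofPred_eq,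
      Prod.mk.injEq, true_and, and_comm]
  · intro z' hz'
    have hempty : Prod.mk z' ⁻¹' {(z, y)} = (∅ : Set Y) :=
      Set.eq_empty_of_forall_notMem fun v hv => hz' (congrArg Prod.fst hv)
    rw [hempty, Set.empty_inter, MeasureTheory.measure_empty]

variable {X : Type*} {ε δ : ℝ} {P : PMF X} {Q} {f : X → Z} {g : Y → Z}

theorem pmfIndist.bind_condOn_fiber (h : pmfIndist ε δ (P.map f) (Q.map g)) :
    pmfIndist ε δ (P.bind fun x => (condOn Q bot {y | g y = f x}).map (Prod.mk (f x)))
      (Q.map fun y => (g y, y)) := by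
  have hbind := h.bind fun z => (condOn Q bot {y | g y = z}).map (Prod.mk z)
  rwa [map_bind_condOn_fiber, PMF.bind_map] at hbind

end Conditioning

theorem coupling_lemma_general {X Y Z : Type*} (ε δ : ℝ) (hδ0 : 0 ≤ δ)
    (P : PMF X) (Q : PMF Y) (f : X → Z) (g : Y → Z) (bot : Y)
    (h : pmfIndist ε δ (P.map f) (Q.map g)) :
    pmfIndist ε δ (P.bind fun x => condOn Q bot {y | g y = f x}) Q ∧
    ENNReal.ofReal (1 - δ) ≤
      (P.bind fun x => (condOn Q bot {y | g y = f x}).map fun y => (x, y)).toOuterMeasure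
        {p : X × Y | f p.1 = g p.2} := by
  have hpair := h.bind_condOn_fiber bot
  constructor
  · have hsnd := hpair.map Prod.snd
    simp only [PMF.map_bind, PMF.map_comp, Function.comp_def, ← Function.id_def, PMF.map_id] at hsnd
    exact hsnd
  · have hgraph : (Q.map fun y => (g y, y)).support ⊆ {p : Z × Y | p.1 = g p.2} := by
      rw [PMF.support_map]
      rintro _ ⟨y, _, rfl⟩
      rfl
    have hprob := hpair.ofReal_one_sub_le_of_support_subset hδ0 hgraph
    simp only [PMF.toOuterMeasure_bind_apply, PMF.toOuterMeasure_map_apply] at hprob ⊢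
    exact hprob

/-- Coupling Lemma: if `f(X) ≈_{ε,δ} g(Y)` for `X ∼ P`, `Y ∼ Q`, then sampling `X ∼ P`
and `Y' ∼ Q_X` (where `Q_x` is `Q` conditioned on `g(Y) = f(x)`, defaulting to the point
mass at `bot`) yields `Y' ≈_{ε,δ} Y`, and `f(X) = g(Y')` with probability at least `1 − δ`. -/
theorem coupling_lemma {X Y Z : Type*} [Countable X] [Countable Y]
    (ε δ : ℝ) (hε : 0 ≤ ε) (hδ0 : 0 ≤ δ) (hδ1 : δ < 1)
    (P : PMF X) (Q : PMF Y) (f : X → Z) (g : Y → Z) (bot : Y)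
    (h : pmfIndist ε δ (P.map f) (Q.map g)) :
    pmfIndist ε δ (P.bind fun x => condOn Q bot {y | g y = f x}) Q ∧
    ENNReal.ofReal (1 - δ) ≤
      (P.bind fun x => (condOn Q bot {y | g y = f x}).map fun y => (x, y)).toOuterMeasure
        {p : X × Y | f p.1 = g p.2} :=
  coupling_lemma_general ε δ hδ0 P Q f g bot h
end

section
/- Group privacy: Let ε > 0, δ ≥ 0, and k ∈ ℕ, and let M : X^n → Y be (ε,δ)-differentially private. Then M is (kε, δ·(e^{kε} − 1)/(e^ε − 1))-differentially private for groups of size k: for all datasets D, D' ∈ X^n differing in at most k coordinates and all measurable sets E ⊆ Y, Pr[M(D) ∈ E] ≤ e^{kε}·Pr[M(D') ∈ E] + δ·(e^{kε} − 1)/(e^ε − 1). -/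
/-!
Change the coordinates on which `D` and `D'` may differ one at a time. Each change costs one
application of `(ε,δ)`-privacy, so after `m` changes the multiplicative factor is `(e^ε)^m`, and the
additive errors obey `a (m+1) = e^ε * a m + δ` with `a 0 = 0`, whose solution is `δ` times a
geometric sum.
-/

open MeasureTheory
open scoped ENNReal

/-- Two datasets are neighbors if they differ in at most one coordinate. -/
def Neighbors {X : Type*} {n : ℕ} (D D' : Fin n → X) : Prop :=
  ∃ i : Fin n, ∀ j : Fin n, j ≠ i → D j = D' j

/-- A randomized algorithm `M : X^n → Y` is `(ε,δ)`-differentially private if for every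
pair of neighboring datasets `D, D'` and every measurable event `E`,
`Pr[M(D) ∈ E] ≤ e^ε·Pr[M(D') ∈ E] + δ`. -/
def DP {X Y : Type*} [MeasurableSpace Y] {n : ℕ} (ε δ : ℝ)
    (M : (Fin n → X) → Measure Y) : Prop :=
  ∀ D D' : Fin n → X, Neighbors D D' → ∀ E : Set Y, MeasurableSet E →
    M D E ≤ ENNReal.ofReal (Real.exp ε) * M D' E + ENNReal.ofReal δ

theorem le_pow_card_mul_add_geom_sum_mul {ι R : Type*} {X : ι → Type*} [Semiring R]
    [PartialOrder R] [IsOrderedRing R] {f : (∀ i, X i) → R} {c d : R} (hc : 0 ≤ c)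
    (hf : ∀ i x y, (∀ j, j ≠ i → x j = y j) → f x ≤ c * f y + d)
    {s : Finset ι} {x y : ∀ i, X i} (hxy : ∀ j ∉ s, x j = y j) :
    f x ≤ c ^ s.card * f y + (∑ m ∈ Finset.range s.card, c ^ m) * d := by
  classical
  induction s using Finset.induction_on generalizing x with
  | empty =>
    obtain rfl : x = y := funext fun j => hxy j (Finset.notMem_empty j)
    simp
  | insert i s hi ih =>
    have hstep : f x ≤ c * f (Function.update x i (y i)) + d :=
      hf i _ _ fun j hj => (Function.update_of_ne hj _ _).symm
    have hagree : ∀ j ∉ s, Function.update x i (y i) j = y j := by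
      intro j hj
      rcases eq_or_ne j i with rfl | hji
      · exact Function.update_self ..
      · rw [Function.update_of_ne hji]
        exact hxy j (by simp [hji, hj])
    calc f x
        ≤ c * f (Function.update x i (y i)) + d := hstep
      _ ≤ c * (c ^ s.card * f y + (∑ m ∈ Finset.range s.card, c ^ m) * d) + d := by
        gcongr
        exact ih hagree
      _ = c ^ (insert i s).card * f y +
            (∑ m ∈ Finset.range (insert i s).card, c ^ m) * d := by
        rw [Finset.card_insert_of_notMem hi, pow_succ', geom_sum_succ]
        simp only [mul_add, add_mul, mul_assoc, one_mul, add_assoc]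

theorem DP.measure_le_pow_card_mul_add {X Y : Type*} [MeasurableSpace Y] {n : ℕ} {ε δ : ℝ}
    {M : (Fin n → X) → Measure Y} (hM : DP ε δ M) {s : Finset (Fin n)} {D D' : Fin n → X}
    (hD : ∀ j ∉ s, D j = D' j) {E : Set Y} (hE : MeasurableSet E) :
    M D E ≤ ENNReal.ofReal (Real.exp ε) ^ s.card * M D' E +
      (∑ m ∈ Finset.range s.card, ENNReal.ofReal (Real.exp ε) ^ m) * ENNReal.ofReal δ :=
  le_pow_card_mul_add_geom_sum_mul (f := fun D => M D E) zero_le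
    (fun i D D' h => hM D D' ⟨i, h⟩ E hE) hD

theorem geom_sum_ofReal {x : ℝ} (hx₀ : 0 ≤ x) (hx₁ : x ≠ 1) (k : ℕ) :
    ∑ m ∈ Finset.range k, ENNReal.ofReal x ^ m = ENNReal.ofReal ((x ^ k - 1) / (x - 1)) := by
  rw [← geom_sum_eq hx₁, ENNReal.ofReal_sum_of_nonneg fun m _ => pow_nonneg hx₀ m]
  simp only [ENNReal.ofReal_pow hx₀]

/-- Group privacy: an `(ε,δ)`-differentially private mechanism is
`(kε, δ·(e^{kε} − 1)/(e^ε − 1))`-differentially private for groups of size `k`: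
for datasets differing in at most `k` coordinates and measurable `E ⊆ Y`,
`Pr[M(D) ∈ E] ≤ e^{kε}·Pr[M(D') ∈ E] + δ·(e^{kε} − 1)/(e^ε − 1)`. -/
theorem dp_group_privacy {X Y : Type*} [MeasurableSpace Y] {n : ℕ}
    (ε δ : ℝ) (hε : 0 < ε) (hδ : 0 ≤ δ) (k : ℕ)
    (M : (Fin n → X) → Measure Y)
    (hDP : DP ε δ M)
    (D D' : Fin n → X)
    (hk : ∃ s : Finset (Fin n), s.card ≤ k ∧ ∀ j ∉ s, D j = D' j)
    (E : Set Y) (hE : MeasurableSet E) :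
    M D E ≤ ENNReal.ofReal (Real.exp (k * ε)) * M D' E +
      ENNReal.ofReal (δ * (Real.exp (k * ε) - 1) / (Real.exp ε - 1)) := by
  obtain ⟨s, hs, hD⟩ := hk
  have hexp : 1 < Real.exp ε := Real.one_lt_exp_iff.mpr hε
  have hc : 1 ≤ ENNReal.ofReal (Real.exp ε) := ENNReal.one_le_ofReal.mpr hexp.le
  calc M D E
      ≤ ENNReal.ofReal (Real.exp ε) ^ s.card * M D' E +
          (∑ m ∈ Finset.range s.card, ENNReal.ofReal (Real.exp ε) ^ m) * ENNReal.ofReal δ :=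
        hDP.measure_le_pow_card_mul_add hD hE
    _ ≤ ENNReal.ofReal (Real.exp ε) ^ k * M D' E +
          (∑ m ∈ Finset.range k, ENNReal.ofReal (Real.exp ε) ^ m) * ENNReal.ofReal δ := by
        gcongr
    _ = ENNReal.ofReal (Real.exp (k * ε)) * M D' E +
          ENNReal.ofReal (δ * (Real.exp (k * ε) - 1) / (Real.exp ε - 1)) := by
        rw [geom_sum_ofReal (Real.exp_nonneg ε) hexp.ne', ← ENNReal.ofReal_pow (Real.exp_nonneg ε),
          ← Real.exp_nat_mul, mul_comm (ENNReal.ofReal (_ / _)), mul_div_assoc,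
          ENNReal.ofReal_mul hδ]
end

section
/- If an abstract data type supports logical deletion, then it is reversible. -/
/-!
Appending deletions of identifiers one after another to a sequence amounts to removing from it all
operations carrying one of these identifiers. Hence `σ`, followed by a deletion of the tag of each
operation in `σ`, is logically equivalent to the empty sequence. An ADT that can return to its
initial state from every reachable state is reversible.
-/

/-- An abstract data type: a set of operations `Op`, logical states `S` with an initial
state, and a deterministic transition function. -/
structure ADT (Op S : Type*) where
  init : S
  step : Op → S → S

/-- The logical state reached by applying a finite sequence of operations starting
from state `s`. -/
def ADT.runFrom {Op S : Type*} (A : ADT Op S) (s : S) (σ : List Op) : S :=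
  σ.foldl (fun t op => A.step op t) s

/-- The logical state `ADT(σ).state` reached from the initial state. -/
def ADT.run {Op S : Type*} (A : ADT Op S) (σ : List Op) : S :=
  A.runFrom A.init σ

/-- A logical state is reachable if some finite operation sequence leads to it from the
initial state. -/
def ADT.Reachable {Op S : Type*} (A : ADT Op S) (s : S) : Prop :=
  ∃ σ : List Op, A.run σ = s

/-- An ADT is reversible if all reachable states are mutually reachable. -/
def ADT.Reversible {Op S : Type*} (A : ADT Op S) : Prop :=
  ∀ a b : S, A.Reachable a → A.Reachable b → ∃ τ : List Op, A.runFrom a τ = b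

/-- An ADT (with operations tagged by identifiers via `tag`) supports logical deletion if
there is, for each identifier `id`, an operation `del id` such that appending `del id` to
any sequence `σ` is logically equivalent to removing from `σ` every operation tagged `id`. -/
def ADT.SupportsLogicalDeletion {Op S ID : Type*} [DecidableEq ID]
    (A : ADT Op S) (tag : Op → ID) (del : ID → Op) : Prop :=
  ∀ (σ : List Op) (id : ID),
    A.run (σ ++ [del id]) = A.run (σ.filter fun op => decide (tag op ≠ id))

namespace ADT

variable {Op S : Type*} (A : ADT Op S)

theorem runFrom_append (s : S) (σ τ : List Op) :
    A.runFrom s (σ ++ τ) = A.runFrom (A.runFrom s σ) τ :=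
  List.foldl_append

theorem run_append (σ τ : List Op) : A.run (σ ++ τ) = A.runFrom (A.run σ) τ :=
  A.runFrom_append A.init σ τ

variable {A}

theorem reversible_iff_forall_exists_run_append_eq_init :
    A.Reversible ↔ ∀ σ : List Op, ∃ τ : List Op, A.run (σ ++ τ) = A.init := by
  constructor
  · intro hA σ
    obtain ⟨τ, hτ⟩ := hA (A.run σ) A.init ⟨σ, rfl⟩ ⟨[], rfl⟩
    exact ⟨τ, by rw [run_append, hτ]⟩
  · rintro hinit _ _ ⟨σ, rfl⟩ ⟨ρ, rfl⟩
    obtain ⟨τ, hτ⟩ := hinit σ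
    refine ⟨τ ++ ρ, ?_⟩
    rw [runFrom_append, ← run_append, hτ, run]

namespace SupportsLogicalDeletion

variable {ID : Type*} [DecidableEq ID] {tag : Op → ID} {del : ID → Op}

theorem run_append_map_del (h : A.SupportsLogicalDeletion tag del) (σ : List Op) (ids : List ID) :
    A.run (σ ++ ids.map del) = A.run (σ.filter fun op => tag op ∉ ids) := by
  induction ids generalizing σ with
  | nil => simp
  | cons id ids ih =>
    calc A.run (σ ++ (id :: ids).map del)
        = A.run ((σ ++ [del id]) ++ ids.map del) := by simp
      _ = A.run ((σ.filter fun op => tag op ≠ id) ++ ids.map del) := by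
        rw [run_append, h, ← run_append]
      _ = A.run ((σ.filter fun op => tag op ≠ id).filter fun op => tag op ∉ ids) := ih _
      _ = A.run (σ.filter fun op => tag op ∉ id :: ids) := by
        simp [List.filter_filter, Bool.and_comm]

theorem run_append_map_del_tag (h : A.SupportsLogicalDeletion tag del) (σ : List Op) :
    A.run (σ ++ (σ.map tag).map del) = A.init := by
  have hfilter : (σ.filter fun op => tag op ∉ σ.map tag) = [] :=
    List.filter_eq_nil_iff.2 fun op hop => by simpa using ⟨op, hop, rfl⟩
  rw [h.run_append_map_del, hfilter, run, runFrom, List.foldl_nil]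

end SupportsLogicalDeletion

end ADT

theorem logical_deletion_implies_reversible_general {Op S ID : Type*} [DecidableEq ID]
    (A : ADT Op S) (tag : Op → ID) (del : ID → Op)
    (h : A.SupportsLogicalDeletion tag del) :
    A.Reversible :=
  ADT.reversible_iff_forall_exists_run_append_eq_init.2 fun σ =>
    ⟨(σ.map tag).map del, h.run_append_map_del_tag σ⟩

/-- If an abstract data type supports logical deletion, then it is reversible. -/
theorem logical_deletion_implies_reversible {Op S ID : Type*} [Countable Op] [DecidableEq ID]
    (A : ADT Op S) (tag : Op → ID) (del : ID → Op)
    (h : A.SupportsLogicalDeletion tag del) :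
    A.Reversible :=
  logical_deletion_implies_reversible_general A tag del h
end

section
/- Shifted Laplace distributions are eventually distinguishable: Let ε > 0 and let L_ε denote the Laplace distribution on ℝ with density (ε/2)·e^{−ε|x|}. For every ε' ≥ 0 and δ' ∈ [0,1), there exists n ∈ ℕ such that the distribution of n + Z for Z ∼ L_ε and the distribution of Z are not (ε',δ')-indistinguishable; in fact, any n with (1/2)·(1 + e^{ε'})·e^{−εn/2} < 1 − δ' works, witnessed by the event [n/2, ∞). (This is the core of the claim that the batch controller running the Laplace counting mechanism satisfies deletion-as-control but is not (ε',δ')-history independent for any ε' < ∞ and δ' < 1.) -/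
/-!
As `|x| ≥ x`, the Laplace density is at most `(ε/2)·e^{-εx}`; together with its symmetry this gives
the tail bounds `P(Z ≥ c) ≤ (1/2)·e^{-εc}` and `P(Z ≤ c) ≤ (1/2)·e^{εc}` for every real `c`, of
either sign. Cutting halfway between `0` and the shift `t`, the event `[t/2, ∞)` has probability at
least `1 - (1/2)·e^{-εt/2}` under `t + Z` and at most `(1/2)·e^{-εt/2}` under `Z`, and the latter
quantity tends to `0` as `t → ∞`.
-/

open MeasureTheory
open scoped ENNReal

/-- The Laplace distribution on ℝ with density `(ε/2)·e^{−ε|x|}` with respect to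
Lebesgue measure. -/
noncomputable def laplace (ε : ℝ) : Measure ℝ :=
  volume.withDensity fun x => ENNReal.ofReal (ε / 2 * Real.exp (-ε * |x|))

/-- `(ε,δ)`-indistinguishability of two measures: for every measurable event `E`,
`P(E) ≤ e^ε·Q(E) + δ` and `Q(E) ≤ e^ε·P(E) + δ`. -/
def mIndist {X : Type*} [MeasurableSpace X] (ε δ : ℝ) (P Q : Measure X) : Prop :=
  ∀ E : Set X, MeasurableSet E →
    P E ≤ ENNReal.ofReal (Real.exp ε) * Q E + ENNReal.ofReal δ ∧
    Q E ≤ ENNReal.ofReal (Real.exp ε) * P E + ENNReal.ofReal δ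

open Filter Topology

lemma map_const_add_Ici {G : Type*} [AddCommGroup G] [PartialOrder G] [IsOrderedAddMonoid G]
    [TopologicalSpace G] [ClosedIciTopology G] [MeasurableSpace G] [OpensMeasurableSpace G]
    [MeasurableAdd G] (μ : Measure G) (t c : G) :
    μ.map (fun x => t + x) (Set.Ici c) = μ (Set.Ici (c - t)) := by
  rw [Measure.map_apply (measurable_const_add t) measurableSet_Ici, Set.preimage_const_add_Ici]

lemma laplace_univ {ε : ℝ} (hε : 0 < ε) : laplace ε Set.univ = 1 := by
  have integral_density : ∫ x : ℝ, ε / 2 * Real.exp (-ε * |x|) = 1 := by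
    rw [integral_comp_abs (f := fun x => ε / 2 * Real.exp (-ε * x)), integral_const_mul,
      integral_exp_mul_Ioi (neg_neg_of_pos hε), mul_zero, Real.exp_zero]
    field_simp
  have integrable_density : Integrable fun x : ℝ => ε / 2 * Real.exp (-ε * |x|) :=
    .of_integral_ne_zero (integral_density ▸ one_ne_zero)
  rw [laplace, withDensity_apply _ .univ, Measure.restrict_univ,
    ← ofReal_integral_eq_lintegral_ofReal integrable_density (.of_forall fun x => by positivity),
    integral_density, ENNReal.ofReal_one]

lemma isProbabilityMeasure_laplace {ε : ℝ} (hε : 0 < ε) : IsProbabilityMeasure (laplace ε) :=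
  ⟨laplace_univ hε⟩

instance isNegInvariant_laplace (ε : ℝ) : (laplace ε).IsNegInvariant where
  neg_eq_self := by
    ext s hs
    rw [Measure.neg, Measure.map_apply measurable_neg hs, laplace,
      withDensity_apply _ (measurable_neg hs), withDensity_apply _ hs]
    simpa only [abs_neg] using (Measure.measurePreserving_neg volume).setLIntegral_comp_preimage hs
      (f := fun x : ℝ => ENNReal.ofReal (ε / 2 * Real.exp (-ε * |x|))) (by fun_prop)

lemma laplace_Ici_le {ε : ℝ} (hε : 0 < ε) (c : ℝ) :
    laplace ε (Set.Ici c) ≤ ENNReal.ofReal (1 / 2 * Real.exp (-ε * c)) := by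
  have hneg : -ε < 0 := neg_neg_of_pos hε
  calc laplace ε (Set.Ici c)
      = ∫⁻ x in Set.Ioi c, ENNReal.ofReal (ε / 2 * Real.exp (-ε * |x|)) := by
        rw [laplace, withDensity_apply _ measurableSet_Ici, setLIntegral_congr Ioi_ae_eq_Ici]
    _ ≤ ∫⁻ x in Set.Ioi c, ENNReal.ofReal (ε / 2 * Real.exp (-ε * x)) := by
        refine lintegral_mono fun x => ENNReal.ofReal_le_ofReal ?_
        gcongr ε / 2 * Real.exp ?_
        exact mul_le_mul_of_nonpos_left (le_abs_self x) hneg.le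
    _ = ENNReal.ofReal (∫ x in Set.Ioi c, ε / 2 * Real.exp (-ε * x)) :=
        (ofReal_integral_eq_lintegral_ofReal ((integrableOn_exp_mul_Ioi hneg c).const_mul (ε / 2))
          (.of_forall fun x => by positivity)).symm
    _ = ENNReal.ofReal (1 / 2 * Real.exp (-ε * c)) := by
        rw [integral_const_mul, integral_exp_mul_Ioi hneg]
        congr 1
        field_simp

lemma laplace_Iic_le {ε : ℝ} (hε : 0 < ε) (c : ℝ) :
    laplace ε (Set.Iic c) ≤ ENNReal.ofReal (1 / 2 * Real.exp (ε * c)) := by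
  rw [← Measure.measure_neg, Set.neg_Iic]
  simpa only [neg_mul_neg] using laplace_Ici_le hε (-c)

lemma one_sub_exp_le_laplace_Ici {ε : ℝ} (hε : 0 < ε) (c : ℝ) :
    ENNReal.ofReal (1 - 1 / 2 * Real.exp (ε * c)) ≤ laplace ε (Set.Ici c) := by
  have := isProbabilityMeasure_laplace hε
  calc ENNReal.ofReal (1 - 1 / 2 * Real.exp (ε * c))
      = 1 - ENNReal.ofReal (1 / 2 * Real.exp (ε * c)) := by
        rw [ENNReal.ofReal_sub _ (by positivity), ENNReal.ofReal_one]
    _ ≤ 1 - laplace ε (Set.Iio c) := by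
        gcongr
        exact (measure_mono Set.Iio_subset_Iic_self).trans (laplace_Iic_le hε c)
    _ = laplace ε (Set.Ici c) := by
        rw [← prob_compl_eq_one_sub measurableSet_Iio, Set.compl_Iio]

lemma not_map_const_add_laplace_Ici_le {ε ε' δ' t c : ℝ} (hε : 0 < ε) (hδ' : 0 ≤ δ')
    (hgap : 1 / 2 * Real.exp (ε * (c - t)) + Real.exp ε' * (1 / 2 * Real.exp (-ε * c)) < 1 - δ') :
    ¬ (laplace ε).map (fun x => t + x) (Set.Ici c) ≤
      ENNReal.ofReal (Real.exp ε') * laplace ε (Set.Ici c) + ENNReal.ofReal δ' := by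
  intro hle
  have tails : ENNReal.ofReal (1 - 1 / 2 * Real.exp (ε * (c - t))) ≤
      ENNReal.ofReal (Real.exp ε' * (1 / 2 * Real.exp (-ε * c)) + δ') :=
    calc ENNReal.ofReal (1 - 1 / 2 * Real.exp (ε * (c - t)))
        ≤ (laplace ε).map (fun x => t + x) (Set.Ici c) :=
          (one_sub_exp_le_laplace_Ici hε (c - t)).trans_eq (map_const_add_Ici _ t c).symm
      _ ≤ ENNReal.ofReal (Real.exp ε') * laplace ε (Set.Ici c) + ENNReal.ofReal δ' := hle
      _ ≤ ENNReal.ofReal (Real.exp ε') * ENNReal.ofReal (1 / 2 * Real.exp (-ε * c)) +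
            ENNReal.ofReal δ' := by
          gcongr
          exact laplace_Ici_le hε c
      _ = ENNReal.ofReal (Real.exp ε' * (1 / 2 * Real.exp (-ε * c)) + δ') := by
          rw [ENNReal.ofReal_add (by positivity) hδ', ENNReal.ofReal_mul (Real.exp_nonneg ε')]
  linarith [(ENNReal.ofReal_le_ofReal_iff (by positivity)).mp tails]

theorem shifted_laplace_distinguishable_general {ε ε' δ' : ℝ} (hε : 0 < ε) (hδ'0 : 0 ≤ δ')
    (hδ'1 : δ' < 1) :
    (∀ᶠ t : ℝ in atTop, ¬ mIndist ε' δ' ((laplace ε).map fun x => t + x) (laplace ε)) ∧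
    ∀ t : ℝ, 1 / 2 * (1 + Real.exp ε') * Real.exp (-(ε * t) / 2) < 1 - δ' →
      ¬ (laplace ε).map (fun x => t + x) (Set.Ici (t / 2)) ≤
        ENNReal.ofReal (Real.exp ε') * laplace ε (Set.Ici (t / 2)) + ENNReal.ofReal δ' := by
  have tails_at_midpoint (t : ℝ) :
      1 / 2 * Real.exp (ε * (t / 2 - t)) + Real.exp ε' * (1 / 2 * Real.exp (-ε * (t / 2))) =
        1 / 2 * (1 + Real.exp ε') * Real.exp (-(ε * t) / 2) := by
    rw [show ε * (t / 2 - t) = -(ε * t) / 2 by ring, show -ε * (t / 2) = -(ε * t) / 2 by ring]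
    ring
  have exponent : Tendsto (fun t : ℝ => -(ε * t) / 2) atTop atBot :=
    (tendsto_neg_atTop_atBot.comp (tendsto_id.const_mul_atTop hε)).atBot_div_const two_pos
  have decay : Tendsto (fun t : ℝ => 1 / 2 * (1 + Real.exp ε') * Real.exp (-(ε * t) / 2))
      atTop (𝓝 0) := by
    simpa only [mul_zero] using (Real.tendsto_exp_comp_nhds_zero.mpr exponent).const_mul _
  refine ⟨?_, fun t ht =>
    not_map_const_add_laplace_Ici_le hε hδ'0 ((tails_at_midpoint t).trans_lt ht)⟩
  filter_upwards [decay.eventually_lt_const (sub_pos.mpr hδ'1)] with t ht hindist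
  exact not_map_const_add_laplace_Ici_le hε hδ'0 ((tails_at_midpoint t).trans_lt ht)
    (hindist _ measurableSet_Ici).1

/-- Shifted Laplace distributions are eventually distinguishable: for every `ε' ≥ 0` and
`δ' ∈ [0,1)` there is `n ∈ ℕ` such that the distributions of `n + Z` and of `Z`, for
`Z ∼ Lap(1/ε)`, are not `(ε',δ')`-indistinguishable; in fact any `n` with
`(1/2)·(1 + e^{ε'})·e^{−εn/2} < 1 − δ'` works, witnessed by the event `[n/2, ∞)`. -/
theorem shifted_laplace_distinguishable (ε : ℝ) (hε : 0 < ε)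
    (ε' δ' : ℝ) (hε' : 0 ≤ ε') (hδ'0 : 0 ≤ δ') (hδ'1 : δ' < 1) :
    (∃ n : ℕ, ¬ mIndist ε' δ' ((laplace ε).map fun x => (n : ℝ) + x) (laplace ε)) ∧
    (∀ n : ℕ, (1 / 2) * (1 + Real.exp ε') * Real.exp (-(ε * n) / 2) < 1 - δ' →
      ¬ (((laplace ε).map fun x => (n : ℝ) + x) (Set.Ici ((n : ℝ) / 2)) ≤
          ENNReal.ofReal (Real.exp ε') * (laplace ε) (Set.Ici ((n : ℝ) / 2)) +
            ENNReal.ofReal δ')) := by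
  have ⟨far, separated⟩ := shifted_laplace_distinguishable_general (ε' := ε') hε hδ'0 hδ'1
  exact ⟨(tendsto_natCast_atTop_atTop.eventually far).exists, fun n => separated n⟩
end
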